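/- Let B be a symmetric transition matrix with I₁(B) ≠ 0 and let v¹,…,vⁿ ∈ ℝ^d with ∑_{i=1}^n v^i = 0. Then the diffusion matrix D := −(2/I₁(B)) ∑_{i<j} det B(i,j) (v^i ⊗ v^j)* is symmetric and positive semidefinite. -/

import Mathlib

/-!
Write `x_i = ⟨v^i, ξ⟩`, so `∑ x_i = 0` and
`ξᵀ D ξ = -(2 / I₁(B)) * Q` with `Q = ∑_{i<j} det B(i,j) x_i x_j`. Since `B` is positive
semidefinite (its quadratic form is a Dirichlet form), its principal minors are nonnegative and
`I₁(B) ≥ 0`; it remains to see that `Q ≤ 0`.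

The number `Q` is the coefficient of `t²` in `det (B + t diag(x))`, by the expansion into principal
minors (`det_add_diagonal_eq_sum`). On the other hand, `B` has zero row and column sums, so adding
all rows to row `r` and then all columns to column `r` turns row and column `r` of `B + t diag(x)`
into `t x`, with corner `t ∑ x_i = 0` (`det_diagonal_smul_add`). Hence the determinant is `t²` times
a polynomial in `t`, whose value at `t = 0` is `Q` (`sum_powersetCard_two_eq_det`): the determinant
of the matrix obtained from `B` by bordering `B(r)` with `x` and a zero corner.
Choosing `r` with `det B(r) ≠ 0`, the Schur complement formula gives
`Q = -det B(r) * zᵀ B(r)⁻¹ z ≤ 0`, where `z` is `x` without its `r`-th entry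
(`det_bordered_nonpos`).
-/

/-- The transition matrix `B` with entries `B_{ij} = −μ_{ij}` for `i ≠ j` and
`B_{ii} = ∑_{j≠i} μ_{ji}`. -/
noncomputable def transMatrix {n : ℕ} (μ : Fin n → Fin n → ℝ) : Matrix (Fin n) (Fin n) ℝ :=
  Matrix.of fun i j => if i = j then ∑ k ∈ Finset.univ.erase i, μ k i else -μ i j

/-- `pminor B S` is the principal minor `det B(S)` of `B`, obtained by deleting the rows
and columns with indices in `S`. -/
noncomputable def pminor {n : ℕ} (B : Matrix (Fin n) (Fin n) ℝ) (S : Finset (Fin n)) : ℝ :=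
  Matrix.det (B.submatrix (fun i : {i : Fin n // i ∉ S} => (i : Fin n))
    (fun j : {j : Fin n // j ∉ S} => (j : Fin n)))

/-- `I₁(B) = ∑_i det B(i)`. -/
noncomputable def I1 {n : ℕ} (B : Matrix (Fin n) (Fin n) ℝ) : ℝ := ∑ i : Fin n, pminor B {i}

/-- The tensor product `a ⊗ b`, the `d×d` matrix with entries `a_ℓ b_m`. -/
noncomputable def outer {d : ℕ} (a b : Fin d → ℝ) : Matrix (Fin d) (Fin d) ℝ :=
  Matrix.of fun l m => a l * b m

/-- The symmetric part `M* = (M + Mᵀ)/2` of a square matrix. -/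
noncomputable def symPart {d : ℕ} (M : Matrix (Fin d) (Fin d) ℝ) : Matrix (Fin d) (Fin d) ℝ :=
  (1 / 2 : ℝ) • (M + M.transpose)

/-- The diffusion matrix `D := −(2/I₁(B)) ∑_{i<j} det B(i,j) (v^i ⊗ v^j)*`. -/
noncomputable def diffMatrix {n d : ℕ} (μ : Fin n → Fin n → ℝ) (v : Fin n → Fin d → ℝ) :
    Matrix (Fin d) (Fin d) ℝ :=
  (-(2 / I1 (transMatrix μ))) •
    ∑ i : Fin n, ∑ j ∈ Finset.univ.filter (fun j => i < j),
      pminor (transMatrix μ) {i, j} • symPart (outer (v i) (v j))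

open Matrix in
/-- If the rows in `S` are taken from `diagonal y` and the others from `B`, the matrix is block
triangular, with a diagonal block on `S` and a principal block of `B` off `S`. -/
lemma det_piecewise_diagonal {R : Type*} [CommRing R] {n : ℕ} (B : Matrix (Fin n) (Fin n) R)
    (y : Fin n → R) (S : Finset (Fin n)) :
    Matrix.det (Matrix.of (S.piecewise (Matrix.diagonal y) B)) =
      (∏ i ∈ S, y i) * Matrix.det (B.submatrix (fun i : {i : Fin n // i ∉ S} => (i : Fin n))
        (fun j : {j : Fin n // j ∉ S} => (j : Fin n))) := by
  rw [twoBlockTriangular_det _ (fun i => i ∉ S), mul_comm]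
  · congr 1
    · have : toSquareBlockProp (Matrix.of (S.piecewise (Matrix.diagonal y) B)) (fun i => ¬ i ∉ S)
          = Matrix.diagonal (fun i : {i : Fin n // ¬ i ∉ S} => y i) := by
        ext ⟨i, hi⟩ ⟨j, hj⟩
        simp only [not_not] at hi hj
        simp [toSquareBlockProp, Finset.piecewise, hi, diagonal_apply]
      rw [this, det_diagonal]
      exact (Finset.prod_subtype S (fun x => by simp) y).symm
    · congr 1
      ext ⟨i, hi⟩ ⟨j, hj⟩
      simp [toSquareBlockProp, Finset.piecewise, hi]
  · intro i hi j hj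
    simp only [not_not] at hi
    have : i ≠ j := fun h => hj (h ▸ hi)
    simp [Finset.piecewise, hi, this]

open Matrix in
/-- Principal minor expansion of `det (diagonal y + B)`, from multilinearity of `det` in the rows. -/
lemma det_add_diagonal_eq_sum {R : Type*} [CommRing R] {n : ℕ} (B : Matrix (Fin n) (Fin n) R)
    (y : Fin n → R) :
    Matrix.det (Matrix.diagonal y + B) = ∑ S : Finset (Fin n),
      (∏ i ∈ S, y i) * Matrix.det (B.submatrix (fun i : {i : Fin n // i ∉ S} => (i : Fin n))
        (fun j : {j : Fin n // j ∉ S} => (j : Fin n))) := by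
  have h := (detRowAlternating (n := Fin n) (R := R)).toMultilinearMap.map_add_univ
    (Matrix.diagonal y) B
  refine h.trans (Finset.sum_congr rfl fun S _ => ?_)
  exact det_piecewise_diagonal B y S

open Matrix in
/-- For `B` with zero row and column sums and `∑ x = 0`, the rows of `M = t diag(x) + B` add up
to `t x`, and once row `r` is replaced by `x` the columns add up to `t` times `x` with `r`-th entry
`∑ x = 0`. Putting these sums in row `r` and column `r` pulls the factor `t ^ 2` out of `det M`. -/
lemma det_diagonal_smul_add {R : Type*} [CommRing R] {n : ℕ} (B : Matrix (Fin n) (Fin n) R)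
    (hrow : ∀ i, ∑ j, B i j = 0) (hcol : ∀ j, ∑ i, B i j = 0) (t : R) (x : Fin n → R)
    (hx : ∑ i, x i = 0) (r : Fin n) :
    Matrix.det (Matrix.diagonal (t • x) + B) =
      t ^ 2 * Matrix.det (((Matrix.diagonal (t • x) + B).updateRow r x).updateCol r
        (Function.update x r 0)) := by
  set M := Matrix.diagonal (t • x) + B with hM
  have h1 : M.det = t * (M.updateRow r x).det := by
    have h := det_updateRow_sum M r (fun _ => 1)
    have e : ∑ k, (1 : R) • M k = t • x := by
      ext j
      have : (∑ k, (1 : R) • M k) j = ∑ k, M k j := by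
        simp only [one_smul]
        exact Finset.sum_apply j Finset.univ M
      rw [this]
      simp [hM, Finset.sum_add_distrib, hcol, diagonal_apply]
    rw [e, det_updateRow_smul, one_smul] at h
    exact h.symm
  have h2 : (M.updateRow r x).det =
      t * ((M.updateRow r x).updateCol r (Function.update x r 0)).det := by
    have h := det_updateCol_sum (M.updateRow r x) r (fun _ => 1)
    have e : (fun k => ∑ i, (1 : R) • (M.updateRow r x) k i) = t • Function.update x r 0 := by
      ext k
      rcases eq_or_ne k r with rfl | hk
      · simp [hx]
      · simp [hM, hk, Finset.sum_add_distrib, hrow, diagonal_apply]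
    rw [e, det_updateCol_smul, one_smul] at h
    exact h.symm
  rw [h1, h2]
  ring

open Matrix Polynomial in
/-- Comparison of the coefficients of `t ^ 2` in the two expressions for `det (t diag(x) + B)`
given by `det_add_diagonal_eq_sum` and `det_diagonal_smul_add`, with `t` the variable of `ℝ[X]`. -/
lemma sum_powersetCard_two_eq_det {n : ℕ} (B : Matrix (Fin n) (Fin n) ℝ)
    (hrow : ∀ i, ∑ j, B i j = 0) (hcol : ∀ j, ∑ i, B i j = 0) (x : Fin n → ℝ)
    (hx : ∑ i, x i = 0) (r : Fin n) :
    ∑ S ∈ Finset.powersetCard 2 Finset.univ, (∏ i ∈ S, x i) * pminor B S =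
      Matrix.det ((B.updateRow r x).updateCol r (Function.update x r 0)) := by
  have h := det_diagonal_smul_add (B.map C) (fun i => by simp [← map_sum, hrow])
    (fun i => by simp [← map_sum, hcol]) (X : ℝ[X]) (fun i => C (x i))
    (by simp [← map_sum, hx]) r
  rw [det_add_diagonal_eq_sum] at h
  have h2 := congrArg (fun p => coeff p 2) h
  have hL : ∀ S : Finset (Fin n), (∏ i ∈ S, ((X : ℝ[X]) • fun i => C (x i) : Fin n → ℝ[X]) i) *
      Matrix.det ((B.map C).submatrix (fun i : {i : Fin n // i ∉ S} => (i : Fin n))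
        (fun j : {j : Fin n // j ∉ S} => (j : Fin n)))
      = C ((∏ i ∈ S, x i) * pminor B S) * X ^ S.card := by
    intro S
    have : Matrix.det ((B.map C).submatrix (fun i : {i : Fin n // i ∉ S} => (i : Fin n))
        (fun j : {j : Fin n // j ∉ S} => (j : Fin n))) = C (pminor B S) := by
      rw [pminor, RingHom.map_det]
      rfl
    rw [this]
    simp only [Pi.smul_apply, smul_eq_mul, Finset.prod_mul_distrib, Finset.prod_const, map_mul,
      map_prod]
    ring
  simp only [hL, finsetSum_coeff, coeff_C_mul_X_pow] at h2
  rw [← Finset.sum_filter] at h2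
  have hf : Finset.powersetCard 2 (Finset.univ : Finset (Fin n)) =
      Finset.univ.filter (fun S : Finset (Fin n) => 2 = S.card) := by
    ext S
    simp [Finset.mem_powersetCard, eq_comm]
  rw [hf, h2, show (2 : ℕ) = 0 + 2 from rfl, coeff_X_pow_mul, coeff_zero_eq_eval_zero,
    ← coe_evalRingHom, RingHom.map_det]
  congr 1
  ext i j
  by_cases hj : j = r <;> by_cases hi : i = r <;>
    simp [updateRow_apply, hi, hj, diagonal_apply,
      apply_ite (eval (0 : ℝ))]

open Matrix in
/-- A positive semidefinite nonsingular matrix `A` (here `B` without row and column `r`) bordered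
by a vector `b` and a zero corner has determinant `-det A * bᵀ A⁻¹ b ≤ 0`. -/
lemma det_bordered_nonpos {n : ℕ} {B : Matrix (Fin n) (Fin n) ℝ} (hB : B.PosSemidef)
    (x : Fin n → ℝ) (r : Fin n) (hr : pminor B {r} ≠ 0) :
    Matrix.det ((B.updateRow r x).updateCol r (Function.update x r 0)) ≤ 0 := by
  set N := (B.updateRow r x).updateCol r (Function.update x r 0) with hN
  let p : Fin n → Prop := fun i => i ∉ ({r} : Finset (Fin n))
  let A : Matrix {i // p i} {i // p i} ℝ := B.submatrix Subtype.val Subtype.val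
  let b : Matrix {i // p i} {i // ¬ p i} ℝ := Matrix.of fun i _ => x i
  have hA : A.PosSemidef := hB.submatrix _
  have hne : ∀ i : {i // p i}, (i : Fin n) ≠ r := fun i h => i.2 (by simp [h])
  have heq : ∀ i : {i // ¬ p i}, (i : Fin n) = r := fun i => by simpa [p] using i.2
  have hdet : A.det ≠ 0 := hr
  let : Invertible A := A.invertibleOfIsUnitDet (isUnit_iff_ne_zero.mpr hdet)
  let : Unique {i // ¬ p i} :=
    ⟨⟨⟨r, by simp [p]⟩⟩, fun i => Subtype.ext (heq i)⟩
  have e1 : toBlock N p p = A := by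
    ext i j
    simp [toBlock, hN, updateRow_apply, hne, A]
  have e2 : toBlock N p (fun j => ¬ p j) = b := by
    ext i j
    simp [toBlock, hN, hne, heq j, b]
  have e3 : toBlock N (fun j => ¬ p j) p = bᴴ := by
    ext i j
    simp [toBlock, hN, updateRow_apply, hne, heq i, b]
  have e4 : toBlock N (fun j => ¬ p j) (fun j => ¬ p j) = 0 := by
    ext i j
    simp [toBlock, hN, heq i, heq j]
  rw [det_toBlock N p, e1, e2, e3, e4, det_fromBlocks₁₁, invOf_eq_nonsing_inv, zero_sub,
    det_unique (-(bᴴ * A⁻¹ * b)), Matrix.neg_apply]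
  have h1 : 0 ≤ (bᴴ * A⁻¹ * b) default default :=
    (hA.inv.conjTranspose_mul_mul_same b).diag_nonneg
  nlinarith [mul_nonneg hA.det_nonneg h1]

lemma sum_powersetCard_two {n : ℕ} {M : Type*} [AddCommMonoid M] (f : Finset (Fin n) → M) :
    ∑ S ∈ Finset.powersetCard 2 Finset.univ, f S =
      ∑ i : Fin n, ∑ j ∈ Finset.univ.filter (fun j => i < j), f {i, j} := by
  rw [Finset.sum_sigma']
  symm
  refine Finset.sum_bij (fun q _ => {q.1, q.2}) ?_ ?_ ?_ (fun _ _ => rfl)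
  · rintro ⟨i, j⟩ h
    simp only [Finset.mem_sigma, Finset.mem_univ, Finset.mem_filter, true_and] at h
    simp [Finset.mem_powersetCard, Finset.card_pair h.ne]
  · rintro ⟨i, j⟩ h ⟨k, l⟩ h' e
    simp only [Finset.mem_sigma, Finset.mem_univ, Finset.mem_filter, true_and] at h h'
    have e' := Finset.ext_iff.mp e
    simp only [Finset.mem_insert, Finset.mem_singleton] at e'
    have a1 := (e' i).1 (Or.inl rfl)
    have a2 := (e' j).1 (Or.inr rfl)
    have : i = k ∧ j = l := by omega
    rw [this.1, this.2]
  · intro S hS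
    obtain ⟨a, b, hab, rfl⟩ := Finset.card_eq_two.mp (Finset.mem_powersetCard.mp hS).2
    rcases lt_or_gt_of_ne hab with h | h
    · exact ⟨⟨a, b⟩, by simpa using h, rfl⟩
    · exact ⟨⟨b, a⟩, by simpa using h, Finset.pair_comm _ _⟩

lemma transMatrix_row_sum {n : ℕ} (μ : Fin n → Fin n → ℝ)
    (hsym : ∀ i j : Fin n, i ≠ j → μ i j = μ j i) (i : Fin n) :
    ∑ j, transMatrix μ i j = 0 := by
  rw [← Finset.add_sum_erase _ _ (Finset.mem_univ i)]
  have : ∀ j ∈ Finset.univ.erase i, transMatrix μ i j = - μ j i := fun j hj => by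
    have hj := Finset.ne_of_mem_erase hj
    simp [transMatrix, hj.symm, hsym i j hj.symm]
  rw [Finset.sum_congr rfl this]
  simp [transMatrix]

lemma transMatrix_symm {n : ℕ} (μ : Fin n → Fin n → ℝ)
    (hsym : ∀ i j : Fin n, i ≠ j → μ i j = μ j i) (i j : Fin n) :
    transMatrix μ i j = transMatrix μ j i := by
  rcases eq_or_ne i j with rfl | h
  · rfl
  · simp [transMatrix, h, h.symm, hsym i j h]

/-- The quadratic form of `B` is the Dirichlet form: `2 xᵀBx = ∑_{i ≠ j} μ_{ij} (x_i - x_j)²`. -/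
lemma transMatrix_posSemidef {n : ℕ} (μ : Fin n → Fin n → ℝ)
    (hnonneg : ∀ i j : Fin n, i ≠ j → 0 ≤ μ i j)
    (hsym : ∀ i j : Fin n, i ≠ j → μ i j = μ j i) : (transMatrix μ).PosSemidef := by
  refine .of_dotProduct_mulVec_nonneg
    (Matrix.IsHermitian.ext fun i j => by simpa using transMatrix_symm μ hsym j i) fun x => ?_
  have hrow := transMatrix_row_sum μ hsym
  have key : ∑ i, ∑ j, -transMatrix μ i j * (x i - x j) ^ 2 =
      2 * (star x ⬝ᵥ (transMatrix μ).mulVec x) := by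
    have h1 : ∑ i, ∑ j, transMatrix μ i j * x i ^ 2 = 0 :=
      Finset.sum_eq_zero fun i _ => by rw [← Finset.sum_mul, hrow, zero_mul]
    have h2 : ∑ i, ∑ j, transMatrix μ i j * x j ^ 2 = 0 := by
      rw [Finset.sum_comm]
      refine Finset.sum_eq_zero fun i _ => ?_
      rw [← Finset.sum_mul, Finset.sum_congr rfl fun j _ => transMatrix_symm μ hsym j i, hrow,
        zero_mul]
    have h3 : star x ⬝ᵥ (transMatrix μ).mulVec x = ∑ i, ∑ j, x i * (transMatrix μ i j * x j) := by
      simp [dotProduct, Matrix.mulVec, Finset.mul_sum]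
    have h4 : ∑ i, ∑ j, -transMatrix μ i j * (x i - x j) ^ 2 =
        2 * ∑ i, ∑ j, x i * (transMatrix μ i j * x j) -
          ∑ i, ∑ j, transMatrix μ i j * x i ^ 2 - ∑ i, ∑ j, transMatrix μ i j * x j ^ 2 := by
      simp only [Finset.mul_sum, ← Finset.sum_sub_distrib]
      exact Finset.sum_congr rfl fun i _ => Finset.sum_congr rfl fun j _ => by ring
    rw [h4, h1, h2, h3, sub_zero, sub_zero]
  have : 0 ≤ ∑ i, ∑ j, -transMatrix μ i j * (x i - x j) ^ 2 := by
    refine Finset.sum_nonneg fun i _ => Finset.sum_nonneg fun j _ => ?_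
    rcases eq_or_ne i j with rfl | h
    · simp
    · have : -transMatrix μ i j = μ i j := by simp [transMatrix, h]
      rw [this]
      exact mul_nonneg (hnonneg i j h) (sq_nonneg _)
  linarith

lemma dotProduct_symPart_outer {d : ℕ} (a b ξ : Fin d → ℝ) :
    ξ ⬝ᵥ (symPart (outer a b)).mulVec ξ = (a ⬝ᵥ ξ) * (b ⬝ᵥ ξ) := by
  have h : ∀ a b : Fin d → ℝ, outer a b = Matrix.vecMulVec a b := fun a b => rfl
  rw [symPart, h, Matrix.transpose_vecMulVec, Matrix.smul_mulVec, Matrix.add_mulVec,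
    Matrix.vecMulVec_mulVec, Matrix.vecMulVec_mulVec, dotProduct_smul, dotProduct_add]
  simp [dotProduct_comm ξ]
  ring

/-- for a symmetric transition matrix with `I₁(B) ≠ 0` and speeds summing to
zero, the diffusion matrix `D` is symmetric and positive semidefinite. -/
theorem diffMatrix_posSemidef (n d : ℕ) (hn : 2 ≤ n) (μ : Fin n → Fin n → ℝ)
    (hnonneg : ∀ i j : Fin n, i ≠ j → 0 ≤ μ i j)
    (hsym : ∀ i j : Fin n, i ≠ j → μ i j = μ j i)
    (hI1 : I1 (transMatrix μ) ≠ 0)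
    (v : Fin n → Fin d → ℝ) (hv : ∑ i : Fin n, v i = 0) :
    (diffMatrix μ v).IsSymm ∧ (diffMatrix μ v).PosSemidef := by
  have hB := transMatrix_posSemidef μ hnonneg hsym
  have hrow := transMatrix_row_sum μ hsym
  have hcol : ∀ j, ∑ i, transMatrix μ i j = 0 := fun j => by
    rw [Finset.sum_congr rfl fun i _ => transMatrix_symm μ hsym i j, hrow]
  have hI1pos : 0 ≤ I1 (transMatrix μ) :=
    Finset.sum_nonneg fun i _ => (hB.submatrix _).det_nonneg
  -- Only an `r` with `det B(r) ≠ 0` is suitable for bordering; `I₁(B) ≠ 0` provides one.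
  obtain ⟨r, -, hr⟩ := Finset.exists_ne_zero_of_sum_ne_zero hI1
  have hS : (diffMatrix μ v).IsSymm := by
    have hs : ∀ a b : Fin d → ℝ, (symPart (outer a b)).transpose = symPart (outer a b) :=
      fun a b => by simp [symPart, add_comm]
    simp [Matrix.IsSymm, diffMatrix, Matrix.transpose_sum, hs]
  refine ⟨hS, .of_dotProduct_mulVec_nonneg (by simpa [Matrix.IsHermitian, Matrix.IsSymm] using hS) fun ξ => ?_⟩
  have hx : ∑ i, v i ⬝ᵥ ξ = 0 := by rw [← sum_dotProduct, hv, zero_dotProduct]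
  have hQ := sum_powersetCard_two_eq_det _ hrow hcol _ hx r
  rw [sum_powersetCard_two] at hQ
  have hle := det_bordered_nonpos hB (fun i => v i ⬝ᵥ ξ) r hr
  rw [← hQ] at hle
  have hform : star ξ ⬝ᵥ (diffMatrix μ v).mulVec ξ = -(2 / I1 (transMatrix μ)) *
      ∑ i, ∑ j ∈ Finset.univ.filter (fun j => i < j),
        (∏ k ∈ ({i, j} : Finset (Fin n)), v k ⬝ᵥ ξ) * pminor (transMatrix μ) {i, j} := by
    rw [star_trivial, diffMatrix, Matrix.smul_mulVec, dotProduct_smul, smul_eq_mul]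
    simp only [Matrix.sum_mulVec, dotProduct_sum, Matrix.smul_mulVec, dotProduct_smul,
      dotProduct_symPart_outer, smul_eq_mul]
    congr 1
    refine Finset.sum_congr rfl fun i _ => Finset.sum_congr rfl fun j hj => ?_
    rw [Finset.prod_pair (Finset.mem_filter.mp hj).2.ne]
    ring
  rw [hform]
  exact mul_nonneg_of_nonpos_of_nonpos (neg_nonpos.mpr (by positivity)) hle
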